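/- arXiv:2006.12943 — 4 statements merged into one kernel-verified Lean document; each statement's English description precedes it below -/
import Mathlib

section
/- Let k be a positive integer, δ ∈ (0,1) with k/δ > 1, write L = ln(k/δ), and let N be a real number with N ≥ 2(√2 + 2/3)² k L. Let μ_1, …, μ_k be nonnegative reals with Σ_{i=1}^k μ_i = 1, and set t = N − (√2 + 2/3) √(k N L). Then Σ_{i=1}^k [ μ_i t + sqrt(2 t μ_i (1−μ_i) L) + (2/3) L ] ≤ N. -/
open Real

/-- Lemma 4.5 (setting `t`): with `L = ln(k/δ)`, `N ≥ 2(√2 + 2/3)² k L` and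
`t = N − (√2 + 2/3) √(k N L)`, the sum of the slacks
`Σ_i [μ_i t + √(2 t μ_i (1−μ_i) L) + (2/3) L]` is at most `N`. -/
theorem stmt_3 (k : ℕ) (hk : 0 < k)
    (δ : ℝ) (hδ : δ ∈ Set.Ioo (0 : ℝ) 1) (hkδ : 1 < (k : ℝ) / δ)
    (L : ℝ) (hL : L = Real.log ((k : ℝ) / δ))
    (N : ℝ) (hN : 2 * (Real.sqrt 2 + 2 / 3) ^ 2 * k * L ≤ N)
    (μ : Fin k → ℝ) (hμ0 : ∀ i, 0 ≤ μ i) (hμsum : ∑ i, μ i = 1)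
    (t : ℝ) (ht : t = N - (Real.sqrt 2 + 2 / 3) * Real.sqrt (k * N * L)) :
    ∑ i, (μ i * t + Real.sqrt (2 * t * μ i * (1 - μ i) * L) + (2 / 3) * L) ≤ N := by
  have hLp : 0 < L := by rw [hL]; exact Real.log_pos hkδ
  have hk1 : (1 : ℝ) ≤ k := by exact_mod_cast hk
  have hkL : 0 < (k : ℝ) * L := by positivity
  have hs2 : 1 ≤ Real.sqrt 2 := by
    rw [Real.one_le_sqrt]; norm_num
  have hkN : (k : ℝ) * L ≤ N := by
    have h1 : (1 : ℝ) ≤ 2 * (Real.sqrt 2 + 2 / 3) ^ 2 := by nlinarith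
    have h2 : 1 * ((k : ℝ) * L) ≤ 2 * (Real.sqrt 2 + 2 / 3) ^ 2 * (k * L) :=
      mul_le_mul_of_nonneg_right h1 hkL.le
    linarith
  have hNp : 0 < N := lt_of_lt_of_le hkL hkN
  have htN : t ≤ N := by
    rw [ht]
    have : 0 ≤ (Real.sqrt 2 + 2 / 3) * Real.sqrt (k * N * L) := by positivity
    linarith
  have hμ1 : ∀ i, μ i ≤ 1 := fun i => by
    rw [← hμsum]
    exact Finset.single_le_sum (fun j _ => hμ0 j) (Finset.mem_univ i)
  have hterm : ∀ i, Real.sqrt (2 * t * μ i * (1 - μ i) * L)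
      ≤ Real.sqrt (2 * N * L) * Real.sqrt (μ i) := fun i => by
    rw [← Real.sqrt_mul (by positivity)]
    apply Real.sqrt_le_sqrt
    have h1 : t * (1 - μ i) ≤ N := by
      have := mul_le_mul_of_nonneg_right htN (sub_nonneg.2 (hμ1 i))
      have := mul_nonneg hNp.le (hμ0 i)
      linarith
    have h2 := mul_le_mul_of_nonneg_right h1
      (mul_nonneg (mul_nonneg zero_le_two (hμ0 i)) hLp.le)
    linarith
  have hcs : ∑ i, Real.sqrt (μ i) ≤ Real.sqrt k := by
    apply Real.le_sqrt_of_sq_le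
    have h := sq_sum_le_card_mul_sum_sq (s := (Finset.univ : Finset (Fin k)))
      (f := fun i => Real.sqrt (μ i))
    simpa [Real.sq_sqrt, hμ0, hμsum] using h
  have hsum : ∑ i, Real.sqrt (2 * t * μ i * (1 - μ i) * L)
      ≤ Real.sqrt 2 * Real.sqrt (k * N * L) := by
    calc _ ≤ ∑ i, Real.sqrt (2 * N * L) * Real.sqrt (μ i) :=
          Finset.sum_le_sum fun i _ => hterm i
      _ = Real.sqrt (2 * N * L) * ∑ i, Real.sqrt (μ i) := by rw [Finset.mul_sum]
      _ ≤ Real.sqrt (2 * N * L) * Real.sqrt k :=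
          mul_le_mul_of_nonneg_left hcs (Real.sqrt_nonneg _)
      _ = _ := by
          rw [← Real.sqrt_mul (by positivity), ← Real.sqrt_mul (by positivity)]
          congr 1; ring
  have hlast : (k : ℝ) * L ≤ Real.sqrt (k * N * L) := by
    apply Real.le_sqrt_of_sq_le
    have := mul_le_mul_of_nonneg_left hkN hkL.le
    linarith
  rw [Finset.sum_add_distrib, Finset.sum_add_distrib, ← Finset.sum_mul, hμsum]
  simp only [Finset.sum_const, Finset.card_univ, Fintype.card_fin, nsmul_eq_mul]
  linarith
end

section
/- Let k be a positive integer, δ ∈ (0,1) with k/δ > 1, write L = ln(k/δ), and let N be a real number with N ≥ 2(√2 + 2/3)² k L. Set t = N − (√2 + 2/3) √(k N L). Let μ_1, …, μ_k be nonnegative reals with Σ_{i=1}^k μ_i = 1, and let n_1, …, n_k be reals with Σ_{i=1}^k n_i = t and |n_i − μ_i t| ≤ sqrt(2 t μ_i (1−μ_i) L) + (2/3) L for every i. Let I = { i : n_i > μ_i t }. Then Σ_{i ∈ I} (n_i − μ_i t) / ((N − t)/(2k)) < k; equivalently, Σ_{i ∈ I} (n_i − μ_i t) < (N − t)/2. 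-/
open Real
open scoped Classical

/-- The deterministic core of Theorem 5.2: with `L = ln(k/δ)`, `N ≥ 2(√2+2/3)² k L`,
`t = N − (√2+2/3)√(k N L)`, and counters `n_i` summing to `t` and each deviating from
`μ_i t` by at most the Bernstein bound, the players `i` with `n_i > μ_i t` send fewer
than `k` notifications in total:
`Σ_{i ∈ I} (n_i − μ_i t) / ((N − t)/(2k)) < k`, equivalently
`Σ_{i ∈ I} (n_i − μ_i t) < (N − t)/2`. -/
theorem stmt_7 (k : ℕ) (hk : 0 < k)
    (δ : ℝ) (hδ : δ ∈ Set.Ioo (0 : ℝ) 1) (hkδ : 1 < (k : ℝ) / δ)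
    (L : ℝ) (hL : L = Real.log ((k : ℝ) / δ))
    (N : ℝ) (hN : 2 * (Real.sqrt 2 + 2 / 3) ^ 2 * k * L ≤ N)
    (t : ℝ) (ht : t = N - (Real.sqrt 2 + 2 / 3) * Real.sqrt (k * N * L))
    (μ : Fin k → ℝ) (hμ0 : ∀ i, 0 ≤ μ i) (hμsum : ∑ i, μ i = 1)
    (n : Fin k → ℝ) (hnsum : ∑ i, n i = t)
    (hdev : ∀ i, |n i - μ i * t| ≤ Real.sqrt (2 * t * μ i * (1 - μ i) * L) + (2 / 3) * L) :
    (∑ i ∈ Finset.univ.filter (fun i => μ i * t < n i),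
        (n i - μ i * t) / ((N - t) / (2 * k))) < (k : ℝ)
    ∧ (∑ i ∈ Finset.univ.filter (fun i => μ i * t < n i), (n i - μ i * t)) < (N - t) / 2 := by
  have hk' : (0 : ℝ) < k := by exact_mod_cast hk
  have hLpos : 0 < L := by rw [hL]; exact Real.log_pos hkδ
  have hkL : 0 < (k : ℝ) * L := mul_pos hk' hLpos
  have hs2 : 1 < Real.sqrt 2 := by
    rw [Real.lt_sqrt (by norm_num)]; norm_num
  have hNkL : (k : ℝ) * L < N := by
    have h1 : 1 < 2 * (Real.sqrt 2 + 2 / 3) ^ 2 := by nlinarith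
    nlinarith
  have hNpos : 0 < N := hkL.trans hNkL
  have hS : (k : ℝ) * L < Real.sqrt (k * N * L) := by
    rw [Real.lt_sqrt hkL.le]
    nlinarith
  have htN : t < N := by
    rw [ht]
    have : 0 < (Real.sqrt 2 + 2 / 3) * Real.sqrt (k * N * L) := by
      apply mul_pos (by linarith) (by linarith)
    linarith
  have hμ1 : ∀ i, μ i ≤ 1 := fun i => by
    rw [← hμsum]
    exact Finset.single_le_sum (fun j _ => hμ0 j) (Finset.mem_univ i)
  -- the deviations sum to zero
  have hzero : ∑ i, (n i - μ i * t) = 0 := by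
    rw [Finset.sum_sub_distrib, ← Finset.sum_mul, hnsum, hμsum]; ring
  have hhalf : 2 * (∑ i ∈ Finset.univ.filter (fun i => μ i * t < n i), (n i - μ i * t))
      = ∑ i, |n i - μ i * t| := by
    have h : ∑ i, |n i - μ i * t| = ∑ i, |n i - μ i * t| + ∑ i, (n i - μ i * t) := by
      rw [hzero, add_zero]
    rw [h, Finset.sum_filter, Finset.mul_sum, ← Finset.sum_add_distrib]
    refine Finset.sum_congr rfl fun i _ => ?_
    split_ifs with hi
    · rw [abs_of_pos (by linarith)]; ring
    · rw [abs_of_nonpos (by linarith)]; ring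
  have hterm : ∀ i, |n i - μ i * t| ≤
      Real.sqrt (2 * N * L) * (Real.sqrt (μ i) * Real.sqrt 1) + (2 / 3) * L := fun i => by
    refine (hdev i).trans ?_
    rw [Real.sqrt_one, mul_one, ← Real.sqrt_mul (by positivity)]
    gcongr ?_ + _
    apply Real.sqrt_le_sqrt
    have h1 : t * (1 - μ i) ≤ N := by nlinarith [hμ0 i, hμ1 i]
    have h2 : 0 ≤ 2 * L * μ i := mul_nonneg (by linarith) (hμ0 i)
    nlinarith [mul_le_mul_of_nonneg_left h1 h2]
  have hcs : ∑ i, Real.sqrt (μ i) * Real.sqrt 1 ≤ Real.sqrt k := by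
    have h := Real.sum_sqrt_mul_sqrt_le (Finset.univ : Finset (Fin k)) (f := μ)
      (g := fun _ => (1 : ℝ)) hμ0 (fun _ => zero_le_one)
    rw [hμsum] at h
    simpa using h
  have hsq : Real.sqrt (2 * N * L) * Real.sqrt k = Real.sqrt 2 * Real.sqrt (k * N * L) := by
    rw [← Real.sqrt_mul (by positivity), ← Real.sqrt_mul (by positivity)]
    congr 1; ring
  have htot : ∑ i, |n i - μ i * t| ≤
      Real.sqrt 2 * Real.sqrt (k * N * L) + (2 / 3) * (k * L) := by
    refine (Finset.sum_le_sum fun i _ => hterm i).trans ?_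
    rw [Finset.sum_add_distrib, ← Finset.mul_sum, ← hsq]
    have := mul_le_mul_of_nonneg_left hcs (Real.sqrt_nonneg (2 * N * L))
    simp only [Finset.sum_const, Finset.card_univ, Fintype.card_fin, nsmul_eq_mul]
    exact add_le_add this (le_of_eq (by ring))
  have hmain : (∑ i ∈ Finset.univ.filter (fun i => μ i * t < n i), (n i - μ i * t))
      < (N - t) / 2 := by
    have : N - t = (Real.sqrt 2 + 2 / 3) * Real.sqrt (k * N * L) := by rw [ht]; ring
    rw [this]
    linarith
  refine ⟨?_, hmain⟩
  rw [← Finset.sum_div, div_lt_iff₀ (div_pos (by linarith) (by linarith))]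
  have : (k : ℝ) * ((N - t) / (2 * k)) = (N - t) / 2 := by field_simp
  rw [this]
  exact hmain
end

section
/- Let k ≥ 1 be a real number, δ ∈ (0,1) with k ln(k/δ) ≥ 1, write α = √2 + 2/3, and let c > 0 be a constant. Suppose T : ℝ → ℝ is a nonnegative function satisfying: (i) T(N) ≤ c·k for all 0 < N < 4k; (ii) T(N) ≤ T(N/2) + c·k for all N with 4k ≤ N < 2α² k ln(k/δ); and (iii) T(N) ≤ T(α √(k N ln(k/δ))) + c·k for all N ≥ 2α² k ln(k/δ). Then there exists a constant C > 0, depending only on c, such that for all N > 0, T(N) ≤ C · k · ( log log( max( N / (k ln(k/δ)), 4 ) ) + log log( max( k/δ, 4 ) ) + 1 ). -/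
open Real

lemma aux_phase2 (k c B : ℝ) (hk : 1 ≤ k) (hc : 0 < c) (T : ℝ → ℝ)
    (h1 : ∀ N, 0 < N → N < 4 * k → T N ≤ c * k)
    (h2 : ∀ N, 4 * k ≤ N → N < B → T N ≤ T (N / 2) + c * k) :
    ∀ n : ℕ, ∀ N, 0 < N → N < B → N < 4 * k * 2 ^ n → T N ≤ (n + 1) * (c * k) := by
  intro n
  induction n with
  | zero =>
    intro N hN _ h
    have := h1 N hN (by simpa using h)
    simpa using this
  | succ n ih =>
    intro N hN hB h
    have hck : 0 < c * k := by positivity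
    push_cast
    rcases lt_or_ge N (4 * k) with hlt | hge
    · have := h1 N hN hlt
      have hn : (0 : ℝ) ≤ n := n.cast_nonneg
      nlinarith
    · have a := h2 N hge hB
      have b := ih (N / 2) (by linarith) (by linarith) (by rw [pow_succ] at h; linarith)
      linarith

lemma aux_phase3 (A M d : ℝ) (hA : 0 < A) (hd : 0 < d) (T : ℝ → ℝ)
    (h2 : ∀ N, 0 < N → N < 2 * A → T N ≤ M)
    (h3 : ∀ N, 2 * A ≤ N → T N ≤ T (√(A * N)) + d) :
    ∀ n : ℕ, ∀ N, 0 < N → N < A * 2 ^ (2 ^ n) → T N ≤ M + n * d := by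
  intro n
  induction n with
  | zero =>
    intro N hN h
    have := h2 N hN (by norm_num at h; linarith)
    simpa using this
  | succ n ih =>
    intro N hN h
    push_cast
    rcases lt_or_ge N (2 * A) with hlt | hge
    · have := h2 N hN hlt
      have hn : (0 : ℝ) ≤ n := n.cast_nonneg
      nlinarith
    · have a := h3 N hge
      have b := ih (√(A * N)) (by positivity) (by
        rw [Real.sqrt_lt' (by positivity)]
        rw [pow_succ 2 n, pow_mul] at h
        nlinarith)
      linarith

lemma aux_loglog (y : ℝ) (hy : 4 ≤ y) : 2 ≤ logb 2 y ∧ 1 ≤ logb 2 (logb 2 y) := by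
  have h : 2 ≤ logb 2 y := by
    rw [Real.le_logb_iff_rpow_le (by norm_num) (by linarith)]
    norm_num; exact hy
  refine ⟨h, ?_⟩
  rw [Real.le_logb_iff_rpow_le (by norm_num) (by linarith)]
  norm_num; exact h

lemma aux_ceil (x : ℝ) (hx : 0 < x) : x ≤ (2 : ℝ) ^ (⌈logb 2 x⌉₊) := by
  rw [← Real.rpow_natCast, ← Real.logb_le_iff_le_rpow (by norm_num) hx]
  exact Nat.le_ceil _

/-- Lemma 4.6: solving the recursion for the communication cost. Writing `α = √2 + 2/3`,
suppose `T : ℝ → ℝ` is nonnegative and satisfies `T(N) ≤ c k` for `0 < N < 4k`,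
`T(N) ≤ T(N/2) + c k` for `4k ≤ N < 2 α² k ln(k/δ)`, and
`T(N) ≤ T(α √(k N ln(k/δ))) + c k` for `N ≥ 2 α² k ln(k/δ)`. Then there is a constant
`C > 0` depending only on `c` such that for all `N > 0`,
`T(N) ≤ C k (log₂ log₂ max(N/(k ln(k/δ)), 4) + log₂ log₂ max(k/δ, 4) + 1)`. -/
theorem stmt_9 (c : ℝ) (hc : 0 < c) :
    ∃ C : ℝ, 0 < C ∧
      ∀ (k δ : ℝ), 1 ≤ k → δ ∈ Set.Ioo (0 : ℝ) 1 → 1 ≤ k * Real.log (k / δ) →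
      ∀ T : ℝ → ℝ, (∀ N, 0 ≤ T N) →
      (∀ N, 0 < N → N < 4 * k → T N ≤ c * k) →
      (∀ N, 4 * k ≤ N → N < 2 * (Real.sqrt 2 + 2 / 3) ^ 2 * k * Real.log (k / δ) →
        T N ≤ T (N / 2) + c * k) →
      (∀ N, 2 * (Real.sqrt 2 + 2 / 3) ^ 2 * k * Real.log (k / δ) ≤ N →
        T N ≤ T ((Real.sqrt 2 + 2 / 3) * Real.sqrt (k * N * Real.log (k / δ))) + c * k) →
      ∀ N, 0 < N →
        T N ≤ C * k * (Real.logb 2 (Real.logb 2 (max (N / (k * Real.log (k / δ))) 4))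
          + Real.logb 2 (Real.logb 2 (max (k / δ) 4)) + 1) := by
  refine ⟨5 * c, by positivity, ?_⟩
  rintro k δ hk ⟨hδ0, hδ1⟩ hkL T hT h1 h2 h3 N hN
  have hk0 : 0 < k := by linarith
  set L := Real.log (k / δ) with hL
  have hL0 : 0 < L := by
    by_contra h
    push Not at h
    nlinarith
  set y := max (N / (k * L)) 4 with hy
  set z := max (k / δ) 4 with hz
  obtain ⟨hy2, hy1⟩ := aux_loglog y (le_max_right _ _)
  obtain ⟨hz2, hz1⟩ := aux_loglog z (le_max_right _ _)
  have hs : √2 ^ 2 = 2 := Real.sq_sqrt (by norm_num)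
  have hs0 : 0 ≤ √2 := Real.sqrt_nonneg 2
  set a := √2 + 2 / 3 with ha
  have ha1 : 1 < a ^ 2 := by nlinarith
  have ha2 : 2 * a ^ 2 < 9 := by
    have : √2 < 1.42 := by rw [Real.sqrt_lt' (by norm_num)]; norm_num
    nlinarith
  have ha0 : 0 < a := by positivity
  have hLz : L ≤ logb 2 z := by
    have e1 : L ≤ Real.log z := Real.log_le_log (by positivity) (le_max_left _ _)
    have e2 : Real.log z ≤ logb 2 z := by
      rw [Real.logb, le_div_iff₀ (Real.log_pos (by norm_num))]
      have := Real.log_two_lt_d9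
      have : 0 ≤ Real.log z := by linarith
      nlinarith
    linarith
  have hck : 0 < c * k := by positivity
  have hA : 0 < a ^ 2 * (k * L) := by positivity
  have p2 : ∀ N, 0 < N → N < 2 * (a ^ 2 * (k * L)) → T N ≤ (logb 2 (logb 2 z) + 4) * (c * k) := by
    intro N hN hlt
    have hc1 := aux_ceil (logb 2 z) (by linarith)
    have hc2 := Nat.ceil_lt_add_one (a := logb 2 (logb 2 z)) (by linarith)
    have hkL' : 0 < k * L := by positivity
    have := aux_phase2 k c (2 * a ^ 2 * k * L) hk hc T h1 h2 (⌈logb 2 (logb 2 z)⌉₊ + 2) N hN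
      (by linarith) (by
        rw [pow_add]
        have e1 : k * L ≤ k * 2 ^ ⌈logb 2 (logb 2 z)⌉₊ := by gcongr; linarith
        have e2 : 2 * a ^ 2 * (k * L) < 9 * (k * L) := by gcongr
        linarith)
    refine this.trans ?_
    push_cast
    exact mul_le_mul_of_nonneg_right (by linarith) hck.le
  have p3 := aux_phase3 (a ^ 2 * (k * L)) _ (c * k) hA hck T p2 (by
    intro N hN
    have := h3 N (by linarith)
    have e : √(a ^ 2 * (k * L) * N) = a * √(k * N * L) := by
      rw [show a ^ 2 * (k * L) * N = a ^ 2 * (k * N * L) by ring,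
        Real.sqrt_mul (by positivity), Real.sqrt_sq ha0.le]
    rw [e]; exact this) ⌈logb 2 (logb 2 y)⌉₊ N hN (by
      have e1 := aux_ceil (logb 2 y) (by linarith)
      have hy4 : 4 ≤ y := le_max_right _ _
      have e2 : y ≤ 2 ^ (2 ^ ⌈logb 2 (logb 2 y)⌉₊) := by
        rw [← Real.rpow_natCast, ← Real.logb_le_iff_le_rpow (by norm_num) (by linarith)]
        push_cast
        exact e1
      have e3 : N ≤ (k * L) * y := by
        have : N / (k * L) ≤ y := le_max_left _ _
        rw [div_le_iff₀ (by positivity)] at this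
        linarith
      have e4 : 1 * (k * L * y) < a ^ 2 * (k * L * y) := by
        have : 0 < k * L * y := by positivity
        gcongr
      calc N < a ^ 2 * (k * L) * y := by linarith
        _ ≤ _ := by gcongr)
  have hc2 := Nat.ceil_lt_add_one (a := logb 2 (logb 2 y)) (by linarith)
  have e5 : (⌈logb 2 (logb 2 y)⌉₊ : ℝ) * (c * k) ≤ (logb 2 (logb 2 y) + 1) * (c * k) := by gcongr
  nlinarith
end

section
/- Let k be a positive integer, δ ∈ (0,1) with k/δ > 1, write L = ln(k/δ), and let N be a real with N > k L. Let μ̂_1, …, μ̂_k be nonnegative reals, write Σ̂ = Σ_{i=1}^k μ̂_i, and assume Σ̂ ≥ 1 and that t = N/Σ̂ − (√2 + 2/3) √( k (N/Σ̂) L ) satisfies t ≥ 0. Then Σ_{i=1}^k [ μ̂_i t + sqrt(2 t μ̂_i L) + (2/3) L ] ≤ N. -/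
open Real

/-- Correctness-constraint step in the proof of Theorem 5.3: with `L = ln(k/δ)`,
`N > k L`, learned upper bounds `μ̂_i ≥ 0` summing to `Σ̂ ≥ 1`, and
`t = N/Σ̂ − (√2 + 2/3)√(k (N/Σ̂) L) ≥ 0`, the learned slacks satisfy
`Σ_i [μ̂_i t + √(2 t μ̂_i L) + (2/3) L] ≤ N`. -/
theorem stmt_11 (k : ℕ) (hk : 0 < k)
    (δ : ℝ) (hδ : δ ∈ Set.Ioo (0 : ℝ) 1) (hkδ : 1 < (k : ℝ) / δ)
    (L : ℝ) (hL : L = Real.log ((k : ℝ) / δ))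
    (N : ℝ) (hN : k * L < N)
    (μhat : Fin k → ℝ) (hμhat0 : ∀ i, 0 ≤ μhat i)
    (Shat : ℝ) (hShat : Shat = ∑ i, μhat i) (hShat1 : 1 ≤ Shat)
    (t : ℝ) (ht : t = N / Shat - (Real.sqrt 2 + 2 / 3) * Real.sqrt (k * (N / Shat) * L))
    (ht0 : 0 ≤ t) :
    ∑ i, (μhat i * t + Real.sqrt (2 * t * μhat i * L) + (2 / 3) * L) ≤ N := by
  have hLpos : 0 < L := hL ▸ Real.log_pos hkδ
  have hkpos : (0 : ℝ) < k := by exact_mod_cast hk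
  have hkL : 0 < k * L := mul_pos hkpos hLpos
  have hNpos : 0 < N := hkL.trans hN
  have hS : 0 < Shat := by linarith
  have hNS : N / Shat * Shat = N := div_mul_cancel₀ _ hS.ne'
  have hNS0 : 0 < N / Shat := div_pos hNpos hS
  set q := N / Shat with hq
  set B := Real.sqrt (k * q * L) with hB
  set A := Real.sqrt (k * N * L) with hA
  have hB0 : 0 ≤ B := Real.sqrt_nonneg _
  have hA0 : 0 ≤ A := Real.sqrt_nonneg _
  have hB2 : B ^ 2 = k * q * L := Real.sq_sqrt (by positivity)
  have hs2 : 0 ≤ Real.sqrt 2 := Real.sqrt_nonneg _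
  have hAB : A ≤ Shat * B := by
    refine Real.sqrt_le_iff.2 ⟨by positivity, ?_⟩
    have h1 : (Shat * B) ^ 2 = Shat * (k * N * L) := by
      rw [mul_pow, hB2, ← hNS]; ring
    rw [h1]
    exact le_mul_of_one_le_left (by positivity) hShat1
  have hkA : k * L ≤ A := by
    refine Real.le_sqrt_of_sq_le ?_
    nlinarith [mul_le_mul_of_nonneg_left hN.le hkL.le]
  have htS : t * Shat ≤ N := by
    have : t ≤ q := by
      rw [ht]
      have : 0 ≤ (Real.sqrt 2 + 2 / 3) * B := by positivity
      linarith
    calc t * Shat ≤ q * Shat := mul_le_mul_of_nonneg_right this hS.le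
      _ = N := hNS
  have hCS : ∑ i, Real.sqrt (2 * t * μhat i * L) ≤ Real.sqrt 2 * A := by
    rw [hA, ← Real.sqrt_mul (by norm_num)]
    refine Real.le_sqrt_of_sq_le ?_
    have h1 := sq_sum_le_card_mul_sum_sq (s := Finset.univ)
      (f := fun i => Real.sqrt (2 * t * μhat i * L))
    have h2 : ∑ i, Real.sqrt (2 * t * μhat i * L) ^ 2 = 2 * t * Shat * L := by
      rw [hShat, Finset.mul_sum, Finset.sum_mul]
      refine Finset.sum_congr rfl fun i _ => Real.sq_sqrt ?_
      have := hμhat0 i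
      positivity
    rw [h2] at h1
    simp only [Finset.card_univ, Fintype.card_fin] at h1
    refine h1.trans ?_
    nlinarith [mul_le_mul_of_nonneg_left htS hkL.le]
  rw [Finset.sum_add_distrib, Finset.sum_add_distrib, ← Finset.sum_mul, ← hShat]
  simp only [Finset.sum_const, Finset.card_univ, Fintype.card_fin, nsmul_eq_mul]
  have h3 : Shat * t = N - (Real.sqrt 2 + 2 / 3) * (Shat * B) := by
    rw [ht, ← hNS]; ring
  have h4 := mul_le_mul_of_nonneg_left hAB (show 0 ≤ Real.sqrt 2 + 2 / 3 by positivity)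
  linarith
end
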